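/- Let n ≥ 1, p : Fin n → ℝ with 0 ≤ p i ≤ 1 for all i, and t : Fin n → ℝ with t i ≤ t j whenever i ≤ j. Let μ_p be the product probability measure on Fin n → Bool whose i-th marginal assigns probability p i to true and 1 - p i to false. Define T(ω) = t i, where i is the least index with ω i = true if such an index exists, and T(ω) = t (n-1) if ω i = false for all i. Then ∫ T dμ_p = ∑_{i=0}^{n-1} (∏_{j<i} (1 - p j)) · p̃ i · t i, where p̃ i = p i for i < n-1 and p̃ (n-1) = 1. (Expected execution time t_PAR of the PAR pattern in Theorem 3.) -/

import Mathlib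

/-!
The completion time is a finite combination of indicators: the service `i` fixes the completion time
exactly when all services before it fail and, unless `i` is the last index, `i` itself succeeds.
These events partition the sample space (`completion_eq_sum`), and the indicator of each one is a
product over the coordinates of functions of one coordinate (`stopFactor`). Under the product
measure the integral of such a product factors, and the Bernoulli integrals give
`(∏ j < i, (1 - p j)) * p̃ i` (`integral_prod_stopFactor`).
-/

open MeasureTheory

/-- The Bernoulli measure on `Bool` assigning probability `a` to `true` and
`1 - a` to `false`. -/
noncomputable def bern (a : ℝ) : Measure Bool :=
  ENNReal.ofReal a • Measure.dirac true + ENNReal.ofReal (1 - a) • Measure.dirac false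

instance (a : ℝ) : IsFiniteMeasure (bern a) := by
  constructor
  rw [bern, Measure.add_apply, Measure.smul_apply, Measure.smul_apply]
  simp only [measure_univ, smul_eq_mul, mul_one]
  exact ENNReal.add_lt_top.mpr ⟨ENNReal.ofReal_lt_top, ENNReal.ofReal_lt_top⟩

lemma integral_bern (a : ℝ) (h0 : 0 ≤ a) (h1 : a ≤ 1) (f : Bool → ℝ) :
    ∫ b, f b ∂(bern a) = a * f true + (1 - a) * f false := by
  rw [bern, integral_add_measure (Integrable.of_finite.smul_measure ENNReal.ofReal_ne_top)
      (Integrable.of_finite.smul_measure ENNReal.ofReal_ne_top),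
    integral_smul_measure, integral_smul_measure, integral_dirac, integral_dirac,
    ENNReal.toReal_ofReal h0, ENNReal.toReal_ofReal (by linarith)]
  simp

/-- The contribution of coordinate `j` to the indicator of the event that service `i` fixes the
completion time: failure is required for `j < i`, success for `j = i` unless `i` is the last
index, and nothing otherwise. -/
def stopFactor {n : ℕ} (i j : Fin n) (b : Bool) : ℝ :=
  if j < i then (if b = true then 0 else 1)
  else if j = i ∧ (i : ℕ) < n - 1 then (if b = true then 1 else 0) else 1

lemma prod_stopFactor {n : ℕ} (i : Fin n) (ω : Fin n → Bool)
    [Decidable ((∀ j < i, ω j = false) ∧ ((i : ℕ) < n - 1 → ω i = true))] :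
    ∏ j, stopFactor i j (ω j) =
      if (∀ j < i, ω j = false) ∧ ((i : ℕ) < n - 1 → ω i = true) then 1 else 0 := by
  split_ifs with h
  · refine Finset.prod_eq_one fun j _ => ?_
    unfold stopFactor
    split_ifs with h1 h2 h3 h4
    · simp [h.1 j h1] at h2
    · rfl
    · rfl
    · obtain ⟨rfl, h3⟩ := h3
      exact absurd (h.2 h3) h4
    · rfl
  · rw [not_and_or] at h
    rcases h with h | h
    · push Not at h
      obtain ⟨j, hj, hω⟩ := h
      refine Finset.prod_eq_zero (Finset.mem_univ j) ?_
      simp_all [stopFactor]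
    · refine Finset.prod_eq_zero (Finset.mem_univ i) ?_
      simp_all [stopFactor]

lemma integral_prod_stopFactor {n : ℕ} (p : Fin n → ℝ)
    (h0 : ∀ i, 0 ≤ p i) (h1 : ∀ i, p i ≤ 1) (i : Fin n) :
    ∫ ω : Fin n → Bool, ∏ j, stopFactor i j (ω j) ∂(Measure.pi fun i : Fin n => bern (p i)) =
      (∏ j ∈ Finset.Iio i, (1 - p j)) * (if (i : ℕ) < n - 1 then p i else 1) := by
  rw [integral_fintype_prod_eq_prod]
  have key : ∀ j, ∫ b, stopFactor i j b ∂(bern (p j)) =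
      (if j ∈ Finset.Iio i then 1 - p j else 1) *
        (if j = i then (if (i : ℕ) < n - 1 then p i else 1) else 1) := by
    intro j
    rw [integral_bern _ (h0 j) (h1 j)]
    rcases lt_trichotomy j i with h | h | h
    · simp [stopFactor, h, h.ne]
    · subst h
      by_cases hj : (j : ℕ) < n - 1 <;> simp [stopFactor, hj]
    · simp [stopFactor, h.not_gt, h.ne']
  simp only [key, Finset.prod_mul_distrib, Finset.prod_ite_mem, Finset.univ_inter,
    Finset.prod_ite_eq', Finset.mem_univ, if_true]

open scoped Classical in
/-- For every outcome exactly one index fixes the completion time: the least successful one, or the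
last index `l` if there is none. -/
lemma completion_eq_sum (n : ℕ) (l : Fin n) (hl : (l : ℕ) = n - 1) (t : Fin n → ℝ)
    (ω : Fin n → Bool) :
    (if h : (Finset.univ.filter fun i => ω i = true).Nonempty
          then t ((Finset.univ.filter fun i => ω i = true).min' h)
          else t l)
      = ∑ i : Fin n, (∏ j, stopFactor i j (ω j)) * t i := by
  simp only [prod_stopFactor, ite_mul, one_mul, zero_mul]
  split_ifs with h
  · set k := (Finset.univ.filter fun i => ω i = true).min' h with hk
    have hkt : ω k = true := (Finset.mem_filter.1 (Finset.min'_mem _ h)).2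
    have hmin : ∀ j, ω j = true → k ≤ j := fun j hj =>
      Finset.min'_le (Finset.univ.filter fun i => ω i = true) _
        (Finset.mem_filter.2 ⟨Finset.mem_univ _, hj⟩)
    have hlt : ∀ j < k, ω j = false := fun j hj => by
      by_contra hc
      exact absurd (hmin j (by simpa using hc)) hj.not_ge
    rw [Finset.sum_eq_single k _ (by simp), if_pos ⟨hlt, fun _ => hkt⟩]
    intro i _ hik
    refine if_neg ?_
    rintro ⟨ha, hb⟩
    rcases lt_or_gt_of_ne hik with hik | hik
    · -- `i < k` forces `i < n - 1`, so `i` succeeds, against the minimality of `k`.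
      have hi : (i : ℕ) < n - 1 := by
        have := k.2
        have : (i : ℕ) < k := hik
        omega
      exact absurd (hmin i (hb hi)) hik.not_ge
    · simp [ha k hik] at hkt
  · have hf : ∀ j, ω j = false := fun j => by
      by_contra hc
      exact h ⟨j, Finset.mem_filter.2 ⟨Finset.mem_univ _, by simpa using hc⟩⟩
    rw [Finset.sum_eq_single l _ (by simp),
      if_pos ⟨fun j _ => hf j, fun hlt => absurd hl hlt.ne⟩]
    intro i _ hi
    refine if_neg ?_
    rintro ⟨-, hb⟩
    have hi' : (i : ℕ) ≠ n - 1 := fun e => hi (Fin.ext (e.trans hl.symm))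
    have := hb (by have := i.2; omega)
    simp [hf i] at this

open scoped Classical in
/-- Expected execution time of the PAR pattern (Theorem 3): with services ordered by
nondecreasing execution times `t`, the operation completes at time `t i` where `i` is
the least successful index (or `t (n-1)` if all fail), and the expected completion
time is `∑ i, (∏ j < i, (1 - p j)) * p̃ i * t i` with `p̃ i = p i` for `i < n-1` and
`p̃ (n-1) = 1`. -/
theorem par_expected_time (n : ℕ) (hn : 1 ≤ n) (p : Fin n → ℝ)
    (h0 : ∀ i, 0 ≤ p i) (h1 : ∀ i, p i ≤ 1)
    (t : Fin n → ℝ) (hmono : ∀ i j : Fin n, i ≤ j → t i ≤ t j) :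
    ∫ ω : Fin n → Bool,
        (if h : (Finset.univ.filter fun i => ω i = true).Nonempty
          then t ((Finset.univ.filter fun i => ω i = true).min' h)
          else t ⟨n - 1, by omega⟩)
        ∂(Measure.pi fun i : Fin n => bern (p i))
      = ∑ i : Fin n, (∏ j ∈ Finset.Iio i, (1 - p j)) *
          (if (i : ℕ) < n - 1 then p i else 1) * t i := by
  simp only [completion_eq_sum n ⟨n - 1, _⟩ rfl t]
  rw [integral_finsetSum _ fun i _ => Integrable.of_finite]
  refine Finset.sum_congr rfl fun i _ => ?_
  rw [integral_mul_const, integral_prod_stopFactor p h0 h1]
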